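/- arXiv:1404.6429 — 2 statements merged into one kernel-verified Lean document; each statement's English description precedes it below -/
import Mathlib

section
/- Let 0 < R < 1/2, let g₀ be the function whose Fourier transform is ĝ₀(u) = cos(πu/(2R)) on [−R,R] and 0 outside, i.e. g₀(x) = ∫_{−R}^{R} cos(πu/(2R)) e^{2iπxu} du. Let Φ(x) = (x² − β²) g₀(x)². Then the Fourier transform of Φ at 0 equals 1/(16R) − β²R and Φ(0) = −16β²R²/π². -/
open Real MeasureTheory

/-!
The profile `w u = cos (πu/(2R))` on `[-R, R]` is continuous, vanishes at `±R`, and satisfies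
`w'' = -c² w` inside the interval, where `c = π/(2R)`. Two integrations by parts turn this into
`(c² - (2πx)²) g₀ x = 2c cos (2πRx)`. Hence `g₀` decays like `x⁻²`, Fourier inversion applies to
it, and `x² g₀² = g₀² / (16R²) - 2 cos (2πRx) g₀ / (8πR)`. The first term integrates to `1/(16R)`
by Parseval, and the second to a multiple of `w R + w (-R) = 0`.
-/

open scoped FourierTransform RealInnerProductSpace

section FourierIntegral

variable {V E : Type*} [NormedAddCommGroup V] [InnerProductSpace ℝ V] [FiniteDimensional ℝ V]
  [MeasurableSpace V] [BorelSpace V] [NormedAddCommGroup E] [NormedSpace ℂ E]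

lemma norm_fourier_le_integral_norm (f : V → E) (v : V) : ‖𝓕 f v‖ ≤ ∫ x, ‖f x‖ :=
  VectorFourier.norm_fourierIntegral_le_integral_norm ..

lemma continuous_fourier_of_integrable {f : V → E} (hf : Integrable f) : Continuous (𝓕 f) :=
  VectorFourier.fourierIntegral_continuous continuous_fourierChar continuous_inner hf

lemma fourier_fourier_apply [CompleteSpace E] {f : V → E} (h_cont : Continuous f)
    (hf : Integrable f) (hf' : Integrable (𝓕 f)) (v : V) : 𝓕 (𝓕 f) v = f (-v) := by
  rw [← neg_neg v, ← fourierInv_eq_fourier_neg, h_cont.fourierInv_fourier_eq hf hf', neg_neg]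

lemma integral_fourier_sq {f : V → ℂ} (h_cont : Continuous f) (hf : Integrable f)
    (hf' : Integrable (𝓕 f)) : ∫ x, 𝓕 f x ^ 2 = ∫ v, f v * f (-v) := by
  have h_flip : ∫ x, 𝓕 f x * 𝓕 f x = ∫ v, f v * 𝓕 (𝓕 f) v := by
    simpa using! VectorFourier.integral_fourierIntegral_smul_eq_flip (L := innerₗ V)
      continuous_fourierChar continuous_inner hf hf'
  simpa only [sq, fourier_fourier_apply h_cont hf hf'] using h_flip

lemma integral_two_mul_cos_smul {f : V → E} (hf : Integrable f) (v : V) :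
    ∫ x, (2 * Real.cos (2 * π * ⟪x, v⟫) : ℂ) • f x = 𝓕 f v + 𝓕 f (-v) := by
  rw [fourier_eq, fourier_eq, ← integral_add ((fourierIntegral_convergent_iff v).2 hf)
    ((fourierIntegral_convergent_iff (-v)).2 hf)]
  congr with x
  rw [Complex.ofReal_cos, Complex.two_cos, add_comm, add_smul]
  simp [Circle.smul_def, fourierChar_apply]

end FourierIntegral

lemma norm_two_mul_cos_le (t : ℝ) : ‖(2 * Real.cos t : ℂ)‖ ≤ 2 := by
  rw [norm_mul, Complex.norm_ofNat, Complex.norm_real, norm_eq_abs]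
  linarith [abs_cos_le_one t]

lemma integrable_of_sq_mul_norm_le {E : Type*} [NormedAddCommGroup E] {f : ℝ → E} {A B : ℝ}
    (hf : AEStronglyMeasurable f) (hA : ∀ x, ‖f x‖ ≤ A) (hB : ∀ x, x ^ 2 * ‖f x‖ ≤ B) :
    Integrable f := by
  refine (integrable_inv_one_add_sq.const_mul (A + B)).mono' hf (.of_forall fun x ↦ ?_)
  rw [← div_eq_mul_inv, le_div_iff₀ (by positivity)]
  linarith [hA x, hB x]

lemma mul_integral_cos_mul_exp (c z : ℂ) (a b : ℝ) :
    (c ^ 2 + z ^ 2) * ∫ u in a..b, Complex.cos (c * u) * Complex.exp (z * u) =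
      Complex.exp (z * b) * (c * Complex.sin (c * b) + z * Complex.cos (c * b)) -
        Complex.exp (z * a) * (c * Complex.sin (c * a) + z * Complex.cos (c * a)) := by
  have h_deriv (u : ℝ) : HasDerivAt
      (fun u : ℝ ↦ Complex.exp (z * u) * (c * Complex.sin (c * u) + z * Complex.cos (c * u)))
      ((c ^ 2 + z ^ 2) * (Complex.cos (c * u) * Complex.exp (z * u))) u := by
    have h_lin (k : ℂ) : HasDerivAt (fun u : ℂ ↦ k * u) k u := by
      simpa using (hasDerivAt_id (u : ℂ)).const_mul k
    refine ((h_lin z).cexp.mul (((h_lin c).csin.const_mul c).add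
      ((h_lin c).ccos.const_mul z))).comp_ofReal.congr_deriv ?_
    simp only [Pi.add_apply]
    ring
  rw [← intervalIntegral.integral_const_mul]
  exact intervalIntegral.integral_eq_sub_of_hasDerivAt (fun u _ ↦ h_deriv u)
    (Continuous.intervalIntegrable (by fun_prop) _ _)

/-- The Fourier transform `ĝ₀` of the function `g₀` in the theorem: the half-period of a cosine
supported on `[-R, R]`. It is complex-valued so that `𝓕` applies. As it is even, `g₀`, which is
its inverse Fourier transform, is also `𝓕 (truncatedCos R)`. -/
noncomputable def truncatedCos (R : ℝ) : ℝ → ℂ :=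
  (Set.Icc (-R) R).indicator fun u ↦ (Real.cos (π * u / (2 * R)) : ℂ)

section TruncatedCos

variable {R : ℝ}

lemma truncatedCos_neg (R u : ℝ) : truncatedCos R (-u) = truncatedCos R u := by
  have h_mem : -u ∈ Set.Icc (-R) R ↔ u ∈ Set.Icc (-R) R := by
    rw [Set.mem_Icc, Set.mem_Icc, neg_le_neg_iff, neg_le, and_comm]
  simp only [truncatedCos, Set.indicator_apply, h_mem, mul_neg, neg_div, Real.cos_neg]

lemma cos_pi_mul_self_div_two_mul (hR : R ≠ 0) : Real.cos (π * R / (2 * R)) = 0 := by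
  rw [mul_div_mul_right _ _ hR, Real.cos_pi_div_two]

lemma truncatedCos_self (hR : R ≠ 0) : truncatedCos R R = 0 := by
  simp only [truncatedCos, Set.indicator_apply_eq_zero, cos_pi_mul_self_div_two_mul hR,
    Complex.ofReal_zero, implies_true]

lemma continuous_truncatedCos (hR : 0 < R) : Continuous (truncatedCos R) := by
  refine Continuous.indicator (fun u hu ↦ ?_) (by fun_prop)
  rw [frontier_Icc (by linarith)] at hu
  obtain rfl | rfl := hu
  · simp only [mul_neg, neg_div, Real.cos_neg, cos_pi_mul_self_div_two_mul hR.ne',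
      Complex.ofReal_zero]
  · rw [cos_pi_mul_self_div_two_mul hR.ne', Complex.ofReal_zero]

lemma integrable_truncatedCos (R : ℝ) : Integrable (truncatedCos R) :=
  (integrable_indicator_iff measurableSet_Icc).2
    (Continuous.integrableOn_Icc (by fun_prop))

lemma integral_mul_truncatedCos (hR : 0 ≤ R) (f : ℝ → ℂ) :
    ∫ u, f u * truncatedCos R u = ∫ u in (-R)..R, f u * (Real.cos (π * u / (2 * R)) : ℂ) := by
  rw [intervalIntegral.integral_of_le (by linarith), ← integral_Icc_eq_integral_Ioc,
    ← integral_indicator measurableSet_Icc]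
  simp only [truncatedCos, Set.indicator_mul_right]

lemma fourier_truncatedCos (hR : 0 ≤ R) (x : ℝ) :
    𝓕 (truncatedCos R) x = ∫ u in (-R)..R,
      (Real.cos (π * u / (2 * R)) : ℂ) * Complex.exp (2 * π * Complex.I * x * u) := by
  have h_inv : 𝓕 (truncatedCos R) = 𝓕⁻ (truncatedCos R) := by
    simp only [fourierInv_eq_fourier_comp_neg, truncatedCos_neg]
  simp only [h_inv, fourierInv_eq', smul_eq_mul, integral_mul_truncatedCos hR]
  congr with u
  rw [mul_comm]
  congr 2
  simp only [RCLike.inner_apply, conj_trivial]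
  push_cast
  ring

lemma mul_fourier_truncatedCos (hR : 0 < R) (x : ℝ) :
    (((π / (2 * R) : ℝ) : ℂ) ^ 2 - (2 * π * x : ℝ) ^ 2) * 𝓕 (truncatedCos R) x =
      (π / (2 * R) : ℝ) * (2 * Real.cos (2 * π * (R * x))) := by
  have hR₀ : (R : ℂ) ≠ 0 := by exact_mod_cast hR.ne'
  have h_arg : ((π / (2 * R) : ℝ) * R : ℂ) = π / 2 := by
    push_cast
    field_simp
  have h_two_cos : (2 * Real.cos (2 * π * (R * x)) : ℂ) =
      Complex.exp (2 * π * Complex.I * x * R) + Complex.exp (-(2 * π * Complex.I * x * R)) := by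
    rw [Complex.ofReal_cos, Complex.two_cos]
    push_cast
    ring_nf
  have h_parts := mul_integral_cos_mul_exp (π / (2 * R) : ℝ) (2 * π * Complex.I * x) (-R) R
  simp only [Complex.ofReal_neg, mul_neg, h_arg, Complex.sin_neg, Complex.cos_neg,
    Complex.sin_pi_div_two, Complex.cos_pi_div_two] at h_parts
  have h_fourier : 𝓕 (truncatedCos R) x = ∫ u in (-R)..R,
      Complex.cos ((π / (2 * R) : ℝ) * u) * Complex.exp (2 * π * Complex.I * x * u) := by
    simp only [fourier_truncatedCos hR.le, mul_div_right_comm, Complex.ofReal_cos,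
      Complex.ofReal_mul]
  have h_sq : (2 * π * Complex.I * x) ^ 2 = -((2 * π * x : ℝ) : ℂ) ^ 2 := by
    push_cast
    linear_combination (2 * π * x : ℂ) ^ 2 * Complex.I_sq
  rw [sub_eq_add_neg, ← h_sq, h_fourier, h_parts, h_two_cos]
  ring

lemma fourier_truncatedCos_zero (hR : 0 < R) : 𝓕 (truncatedCos R) 0 = 4 * R / π := by
  have hR₀ : (R : ℂ) ≠ 0 := by exact_mod_cast hR.ne'
  have hπ : (π : ℂ) ≠ 0 := by exact_mod_cast pi_ne_zero
  have h := mul_fourier_truncatedCos hR 0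
  simp only [mul_zero, Real.cos_zero] at h
  push_cast at h
  field_simp at h ⊢
  exact mul_left_cancel₀ hπ (by linear_combination h)

lemma sq_mul_fourier_truncatedCos (hR : 0 < R) (x : ℝ) :
    (x : ℂ) ^ 2 * 𝓕 (truncatedCos R) x = 1 / (16 * R ^ 2) * 𝓕 (truncatedCos R) x -
      1 / (8 * π * R) * (2 * Real.cos (2 * π * (R * x))) := by
  have hR₀ : (R : ℂ) ≠ 0 := by exact_mod_cast hR.ne'
  have hπ : (π : ℂ) ≠ 0 := by exact_mod_cast pi_ne_zero
  have h := mul_fourier_truncatedCos hR x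
  generalize Real.cos (2 * π * (R * x)) = k at h ⊢
  push_cast at h ⊢
  field_simp at h ⊢
  linear_combination -8 * h

lemma integrable_fourier_truncatedCos (hR : 0 < R) : Integrable (𝓕 (truncatedCos R)) := by
  refine integrable_of_sq_mul_norm_le
    (B := 1 / (16 * R ^ 2) * (∫ u, ‖truncatedCos R u‖) + 1 / (8 * π * R) * 2)
    (continuous_fourier_of_integrable (integrable_truncatedCos R)).aestronglyMeasurable
    (norm_fourier_le_integral_norm _) fun x ↦ ?_
  calc x ^ 2 * ‖𝓕 (truncatedCos R) x‖
      = ‖(x : ℂ) ^ 2 * 𝓕 (truncatedCos R) x‖ := by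
        rw [norm_mul, norm_pow, Complex.norm_real, norm_eq_abs, sq_abs]
    _ ≤ ‖(1 / (16 * R ^ 2) : ℂ)‖ * ‖𝓕 (truncatedCos R) x‖ +
          ‖(1 / (8 * π * R) : ℂ)‖ * ‖(2 * Real.cos (2 * π * (R * x)) : ℂ)‖ := by
        rw [sq_mul_fourier_truncatedCos hR, ← norm_mul, ← norm_mul]
        exact norm_sub_le _ _
    _ = 1 / (16 * R ^ 2) * ‖𝓕 (truncatedCos R) x‖ +
          1 / (8 * π * R) * ‖(2 * Real.cos (2 * π * (R * x)) : ℂ)‖ := by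
        simp [abs_of_pos hR, abs_of_pos pi_pos]
    _ ≤ 1 / (16 * R ^ 2) * (∫ u, ‖truncatedCos R u‖) + 1 / (8 * π * R) * 2 := by
        gcongr
        · exact norm_fourier_le_integral_norm _ x
        · exact norm_two_mul_cos_le _

lemma integrable_fourier_truncatedCos_sq (hR : 0 < R) :
    Integrable fun x ↦ 𝓕 (truncatedCos R) x ^ 2 := by
  simp only [sq]
  exact (integrable_fourier_truncatedCos hR).bdd_mul
    (continuous_fourier_of_integrable (integrable_truncatedCos R)).aestronglyMeasurable
    (.of_forall (norm_fourier_le_integral_norm _))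

lemma integral_cos_sq_half_period (hR : R ≠ 0) :
    ∫ u in (-R)..R, Real.cos (π * u / (2 * R)) ^ 2 = R := by
  simp only [mul_div_right_comm π]
  rw [intervalIntegral.integral_comp_mul_left (fun u ↦ Real.cos u ^ 2) (by positivity),
    integral_cos_sq]
  simp only [mul_neg, Real.cos_neg, ← mul_div_right_comm, cos_pi_mul_self_div_two_mul hR]
  rw [smul_eq_mul]
  field_simp
  ring

lemma integral_fourier_truncatedCos_sq (hR : 0 < R) :
    ∫ x, 𝓕 (truncatedCos R) x ^ 2 = R := by
  rw [integral_fourier_sq (continuous_truncatedCos hR) (integrable_truncatedCos R)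
    (integrable_fourier_truncatedCos hR)]
  simp only [truncatedCos_neg]
  calc ∫ u, truncatedCos R u * truncatedCos R u
      = ∫ u in (-R)..R, ((Real.cos (π * u / (2 * R)) ^ 2 : ℝ) : ℂ) := by
        rw [integral_mul_truncatedCos hR.le]
        refine intervalIntegral.integral_congr fun u hu ↦ ?_
        rw [Set.uIcc_of_le (by linarith)] at hu
        simp only [truncatedCos, Set.indicator_of_mem hu, Complex.ofReal_pow, ← sq]
    _ = R := by
        rw [intervalIntegral.integral_ofReal, integral_cos_sq_half_period hR.ne']

lemma integral_two_mul_cos_mul_fourier_truncatedCos (hR : 0 < R) :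
    ∫ x, (2 * Real.cos (2 * π * (R * x)) : ℂ) * 𝓕 (truncatedCos R) x = 0 := by
  have h_fourier := integral_two_mul_cos_smul (integrable_fourier_truncatedCos hR) R
  simp only [fourier_fourier_apply (continuous_truncatedCos hR) (integrable_truncatedCos R)
    (integrable_fourier_truncatedCos hR), truncatedCos_neg, truncatedCos_self hR.ne'] at h_fourier
  simpa using h_fourier

lemma sq_mul_fourier_truncatedCos_sq (hR : 0 < R) (x : ℝ) :
    (x : ℂ) ^ 2 * 𝓕 (truncatedCos R) x ^ 2 = 1 / (16 * R ^ 2) * 𝓕 (truncatedCos R) x ^ 2 -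
      1 / (8 * π * R) *
        ((2 * Real.cos (2 * π * (R * x)) : ℂ) * 𝓕 (truncatedCos R) x) := by
  linear_combination 𝓕 (truncatedCos R) x * sq_mul_fourier_truncatedCos hR x

lemma integrable_two_mul_cos_mul_fourier_truncatedCos (hR : 0 < R) :
    Integrable fun x : ℝ ↦
      (2 * Real.cos (2 * π * (R * x)) : ℂ) * 𝓕 (truncatedCos R) x :=
  (integrable_fourier_truncatedCos hR).bdd_mul (by fun_prop)
    (.of_forall fun _ ↦ norm_two_mul_cos_le _)

lemma integrable_sq_mul_fourier_truncatedCos_sq (hR : 0 < R) :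
    Integrable fun x : ℝ ↦ (x : ℂ) ^ 2 * 𝓕 (truncatedCos R) x ^ 2 := by
  simp only [sq_mul_fourier_truncatedCos_sq hR]
  exact ((integrable_fourier_truncatedCos_sq hR).const_mul _).sub
    ((integrable_two_mul_cos_mul_fourier_truncatedCos hR).const_mul _)

lemma integral_sq_mul_fourier_truncatedCos_sq (hR : 0 < R) :
    ∫ x : ℝ, (x : ℂ) ^ 2 * 𝓕 (truncatedCos R) x ^ 2 = 1 / (16 * R) := by
  have hR₀ : (R : ℂ) ≠ 0 := by exact_mod_cast hR.ne'
  simp only [sq_mul_fourier_truncatedCos_sq hR]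
  rw [integral_sub ((integrable_fourier_truncatedCos_sq hR).const_mul _)
    ((integrable_two_mul_cos_mul_fourier_truncatedCos hR).const_mul _), integral_const_mul,
    integral_const_mul, integral_fourier_truncatedCos_sq hR,
    integral_two_mul_cos_mul_fourier_truncatedCos hR]
  field_simp
  ring

end TruncatedCos

theorem fourier_transform_phi_at_zero_general {R : ℝ} (hR : 0 < R) (β : ℂ) {g₀ : ℝ → ℂ}
    (hg₀ : ∀ x : ℝ, g₀ x = ∫ u in (-R)..R,
      (Real.cos (π * u / (2 * R)) : ℂ) * Complex.exp (2 * π * Complex.I * x * u))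
    {Φ : ℝ → ℂ} (hΦ : ∀ x : ℝ, Φ x = ((x : ℂ) ^ 2 - β ^ 2) * g₀ x ^ 2) :
    Integrable Φ ∧ ∫ x, Φ x = 1 / (16 * R) - β ^ 2 * R ∧
      Φ 0 = -(16 * β ^ 2 * R ^ 2) / π ^ 2 := by
  have h_g₀ (x : ℝ) : g₀ x = 𝓕 (truncatedCos R) x := by
    rw [hg₀, fourier_truncatedCos hR.le]
  have h_Φ : Φ = fun x : ℝ ↦
      (x : ℂ) ^ 2 * 𝓕 (truncatedCos R) x ^ 2 - β ^ 2 * 𝓕 (truncatedCos R) x ^ 2 := by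
    ext x
    rw [hΦ, h_g₀, sub_mul]
  have h_moment := integrable_sq_mul_fourier_truncatedCos_sq hR
  have h_mass := (integrable_fourier_truncatedCos_sq hR).const_mul (β ^ 2)
  refine ⟨h_Φ ▸ h_moment.sub h_mass, ?_, ?_⟩
  · rw [h_Φ, integral_sub h_moment h_mass, integral_sq_mul_fourier_truncatedCos_sq hR,
      integral_const_mul, integral_fourier_truncatedCos_sq hR]
  · rw [hΦ, h_g₀, fourier_truncatedCos_zero hR, Complex.ofReal_zero]
    ring

/-- With `g₀(x) = ∫_{-R}^{R} cos(πu/(2R)) e^{2iπxu} du` and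
`Φ(x) = (x² - β²) g₀(x)²`, the Fourier transform of `Φ` at `0` (i.e. `∫ Φ`)
equals `1/(16R) - β²R`, and `Φ(0) = -16β²R²/π²`. -/
theorem fourier_transform_phi_at_zero (R β : ℝ) (hR : 0 < R) (hR' : R < 1 / 2)
    (g₀ : ℝ → ℂ)
    (hg₀ : ∀ x : ℝ, g₀ x = ∫ u in (-R)..R,
      (Real.cos (Real.pi * u / (2 * R)) : ℂ) *
        Complex.exp (2 * Real.pi * Complex.I * x * u))
    (Φ : ℝ → ℂ) (hΦ : ∀ x : ℝ, Φ x = ((x : ℂ) ^ 2 - (β : ℂ) ^ 2) * (g₀ x) ^ 2) :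
    (∫ x : ℝ, Φ x) = ((1 / (16 * R) - β ^ 2 * R : ℝ) : ℂ) ∧
      Φ 0 = ((-(16 * β ^ 2 * R ^ 2) / Real.pi ^ 2 : ℝ) : ℂ) := by
  exact_mod_cast (fourier_transform_phi_at_zero_general hR β hg₀ hΦ).2
end

section
/- For λ > 0 not an odd integer and |u| ≤ 1, the series identity 2∑_{n odd ≥1} (−1)^{(n−1)/2} cos(πnu/2)/(n(n²−λ²)) = (π/(2λ² cos(πλ/2)))·(cos(πλu/2) − cos(πλ/2)) holds. -/
/-!
The function `x ↦ cos (a x) - cos a`, with `a = π λ / 2`, vanishes at `x = ±1`, so its extension to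
an antiperiodic function of antiperiod `2` is continuous. Multiplying it by `exp (-π I x / 2)`
makes it `2`-periodic, hence it is the sum of a Fourier series in the exponentials
`exp (π I n x / 2)` with `n` odd. The coefficients are elementary integrals; they are even in `n`
and of order `n⁻³`, so the series converges absolutely and the terms for `n` and `-n` combine into
cosines.
-/

open Real

section FourierSeries

variable {a b : ℝ} {f : ℝ → ℂ} {x : ℝ}

theorem hasSum_fourierCoeffOn_of_summable (hab : a < b) (hf : ContinuousOn f (Set.Icc a b))
    (hfab : f a = f b) (hs : Summable (fourierCoeffOn hab f)) (hx : x ∈ Set.Icc a b) :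
    HasSum (fun n : ℤ ↦ fourierCoeffOn hab f n • fourier n (x : AddCircle (b - a))) (f x) := by
  have : Fact (0 < b - a) := ⟨sub_pos.2 hab⟩
  have hcont : Continuous (AddCircle.liftIoc (b - a) a f) :=
    AddCircle.liftIoc_continuous (by rwa [add_sub_cancel]) (by rwa [add_sub_cancel])
  have hval : AddCircle.liftIoc (b - a) a f x = f x := by
    rcases hx.1.eq_or_lt with rfl | hax
    · rw [← AddCircle.coe_add_period, AddCircle.liftIoc_coe_apply (by simpa using hab),
        add_sub_cancel, hfab]
    · exact AddCircle.liftIoc_coe_apply ⟨hax, by simpa using hx.2⟩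
  rw [← hval]
  exact has_pointwise_sum_fourier_series_of_summable (f := ⟨_, hcont⟩) hs (x : AddCircle (b - a))

theorem hasSum_exp_int_add_of_summable (hab : a < b) (hf : ContinuousOn f (Set.Icc a b)) {θ : ℂ}
    (hfab : f b = Complex.exp (2 * π * Complex.I * θ) * f a) {c : ℤ → ℂ} (hs : Summable c)
    (hc : ∀ n : ℤ, ∫ x in a..b, Complex.exp (-(2 * π * Complex.I * (n + θ) * x / (b - a))) * f x =
      (b - a) * c n)
    (hx : x ∈ Set.Icc a b) :
    HasSum (fun n : ℤ ↦ c n * Complex.exp (2 * π * Complex.I * (n + θ) * x / (b - a))) (f x) := by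
  have hT : (b - a : ℂ) ≠ 0 := by exact_mod_cast (sub_pos.2 hab).ne'
  set g : ℝ → ℂ := fun y ↦ Complex.exp (-(2 * π * Complex.I * θ * y / (b - a))) * f y with hg
  have hg_cont : ContinuousOn g (Set.Icc a b) := by fun_prop
  have hg_periodic : g a = g b := by
    simp only [hg, hfab]
    rw [← mul_assoc, ← Complex.exp_add]
    congr 2
    field_simp
    ring
  have hg_coeff : fourierCoeffOn hab g = c := by
    ext n
    have hintegrand (y : ℝ) : fourier (-n) (y : AddCircle (b - a)) • g y =
        Complex.exp (-(2 * π * Complex.I * (n + θ) * y / (b - a))) * f y := by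
      rw [fourier_coe_apply, smul_eq_mul, ← mul_assoc, ← Complex.exp_add]
      congr 2
      push_cast
      ring
    simp_rw [fourierCoeffOn_eq_integral, hintegrand, hc, Complex.real_smul]
    push_cast
    field_simp
  have hsum := (hasSum_fourierCoeffOn_of_summable hab hg_cont hg_periodic
    (by rwa [hg_coeff]) hx).mul_left (Complex.exp (2 * π * Complex.I * θ * x / (b - a)))
  rw [← mul_assoc, ← Complex.exp_add, add_neg_cancel, Complex.exp_zero, one_mul] at hsum
  refine hsum.congr_fun fun n ↦ ?_
  rw [hg_coeff, fourier_coe_apply, smul_eq_mul, mul_left_comm, ← Complex.exp_add]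
  congr 2
  push_cast
  ring

end FourierSeries

section Integrals

variable {a b : ℂ}

theorem integral_exp_mul_I_symm (r : ℝ) (ha : a ≠ 0) :
    ∫ x in -r..r, Complex.exp (a * Complex.I * x) = 2 * Complex.sin (a * r) / a := by
  have hneg : a * Complex.I * (-r : ℝ) = -(a * r) * Complex.I := by push_cast; ring
  rw [integral_exp_mul_complex (mul_ne_zero ha Complex.I_ne_zero), mul_right_comm, hneg,
    Complex.two_sin]
  field_simp
  linear_combination (Complex.exp (a * r * Complex.I) - Complex.exp (-(a * r * Complex.I))) *
    Complex.I_sq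

theorem integral_exp_mul_cos_symm (r : ℝ) (hsub : b - a ≠ 0) (hadd : b + a ≠ 0) :
    ∫ x in -r..r, Complex.exp (-(b * Complex.I * x)) * Complex.cos (a * x) =
      Complex.sin ((b - a) * r) / (b - a) + Complex.sin ((b + a) * r) / (b + a) := by
  have hexp (x : ℝ) : Complex.exp (-(b * Complex.I * x)) * Complex.cos (a * x) =
      (Complex.exp (-(b - a) * Complex.I * x) + Complex.exp (-(b + a) * Complex.I * x)) / 2 := by
    rw [Complex.cos, mul_div_assoc', mul_add, ← Complex.exp_add, ← Complex.exp_add]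
    ring_nf
  simp_rw [hexp]
  rw [intervalIntegral.integral_div, intervalIntegral.integral_add
      (Continuous.intervalIntegrable (by fun_prop) _ _)
      (Continuous.intervalIntegrable (by fun_prop) _ _),
    integral_exp_mul_I_symm r (neg_ne_zero.2 hsub), integral_exp_mul_I_symm r (neg_ne_zero.2 hadd)]
  simp only [neg_mul, Complex.sin_neg, mul_neg, neg_div_neg_eq]
  ring

theorem integral_exp_mul_cos_sub_cos {r : ℝ} (hsq : b ^ 2 - a ^ 2 ≠ 0)
    (hcos : Complex.cos (b * r) = 0) :
    ∫ x in -r..r, Complex.exp (-(b * Complex.I * x)) *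
        (Complex.cos (a * x) - Complex.cos (a * r)) =
      2 * a ^ 2 * Complex.cos (a * r) * Complex.sin (b * r) / (b * (b ^ 2 - a ^ 2)) := by
  have hb : b ≠ 0 := by rintro rfl; simp at hcos
  obtain ⟨hadd, hsub⟩ := mul_ne_zero_iff.1 (sq_sub_sq b a ▸ hsq)
  have hexp : ∫ x in -r..r, Complex.exp (-(b * Complex.I * x)) = 2 * Complex.sin (b * r) / b := by
    simpa [neg_div_neg_eq] using integral_exp_mul_I_symm r (neg_ne_zero.2 hb)
  simp_rw [mul_sub]
  rw [intervalIntegral.integral_sub (Continuous.intervalIntegrable (by fun_prop) _ _)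
      (Continuous.intervalIntegrable (by fun_prop) _ _),
    intervalIntegral.integral_mul_const, hexp, integral_exp_mul_cos_symm r hsub hadd,
    sub_mul, add_mul, Complex.sin_sub, Complex.sin_add, hcos]
  field_simp
  ring

end Integrals

section OddFrequencies

theorem ne_odd_int_of_ne_odd_nat {x : ℝ} (hx : 0 ≤ x) (hodd : ∀ k : ℕ, x ≠ 2 * k + 1) (m : ℤ) :
    x ≠ 2 * m + 1 := by
  rintro rfl
  have hpos : 0 ≤ 2 * m + 1 := by exact_mod_cast hx
  lift m to ℕ using by omega
  exact hodd m (by rw [Int.cast_natCast])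

variable {lam : ℂ}

theorem odd_sq_sub_sq_ne_zero (hodd : ∀ m : ℤ, lam ≠ 2 * m + 1) (m : ℤ) :
    (2 * m + 1 : ℂ) ^ 2 - lam ^ 2 ≠ 0 := by
  rw [sq_sub_sq]
  refine mul_ne_zero (fun h ↦ hodd (-(m + 1)) ?_) (sub_ne_zero.2 (hodd m).symm)
  push_cast
  linear_combination h

theorem cos_pi_mul_div_two_ne_zero (hodd : ∀ m : ℤ, lam ≠ 2 * m + 1) :
    Complex.cos (π * lam / 2) ≠ 0 := by
  rw [Complex.cos_ne_zero_iff]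
  intro m h
  apply hodd m
  have hpi : (π : ℂ) ≠ 0 := by exact_mod_cast pi_ne_zero
  field_simp at h
  exact h

theorem cos_pi_mul_odd_div_two (m : ℤ) : Complex.cos (π * (2 * m + 1) / 2) = 0 :=
  Complex.cos_eq_zero_iff.2 ⟨m, by ring⟩

theorem sin_pi_mul_odd_div_two (m : ℤ) : Complex.sin (π * (2 * m + 1) / 2) = (-1) ^ m := by
  have h : Real.sin (π / 2 + m * π) = (-1) ^ m := by
    rw [Real.sin_add_int_mul_pi, Real.sin_pi_div_two, mul_one]
  rw [← Complex.ofReal_inj] at h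
  push_cast at h
  rw [← h]
  ring_nf

/-- The coefficient `(-1) ^ ((n - 1) / 2) / (n (n² - λ²))` of the series for odd `n = 2 m + 1`.
The index `m` runs over all integers, so that `n` takes negative values as well. -/
noncomputable def oddCosineCoeff (lam : ℂ) (m : ℤ) : ℂ :=
  (-1) ^ m / ((2 * m + 1) * ((2 * m + 1) ^ 2 - lam ^ 2))

theorem oddCosineCoeff_neg_add_one (lam : ℂ) (m : ℤ) :
    oddCosineCoeff lam (-(m + 1)) = oddCosineCoeff lam m := by
  have hodd : (2 * (-(m + 1) : ℤ) + 1 : ℂ) = -(2 * m + 1) := by push_cast; ring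
  have hsign : (-1 : ℂ) ^ (-(m + 1)) = -(-1) ^ m := by
    rw [zpow_neg, ← inv_zpow, inv_neg_one, zpow_add_one₀ (by norm_num), mul_neg_one]
  rw [oddCosineCoeff, oddCosineCoeff, hodd, hsign, neg_sq, neg_mul, neg_div_neg_eq]

theorem norm_oddCosineCoeff_le {k : ℕ} (hk : 1 ≤ k) (hlam : ‖lam‖ ≤ k) :
    ‖oddCosineCoeff lam k‖ ≤ 1 / (k : ℝ) ^ 2 := by
  have hk' : (1 : ℝ) ≤ k := by exact_mod_cast hk
  have hodd : ‖(2 * k + 1 : ℂ)‖ = 2 * k + 1 := by exact_mod_cast Complex.norm_natCast (2 * k + 1)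
  have hsq : (k : ℝ) ^ 2 ≤ ‖(2 * k + 1 : ℂ) ^ 2 - lam ^ 2‖ :=
    calc (k : ℝ) ^ 2 ≤ (2 * k + 1) ^ 2 - ‖lam‖ ^ 2 := by nlinarith [norm_nonneg lam]
      _ = ‖(2 * k + 1 : ℂ) ^ 2‖ - ‖lam ^ 2‖ := by rw [norm_pow, norm_pow, hodd]
      _ ≤ _ := norm_sub_norm_le _ _
  simp only [oddCosineCoeff, Int.cast_natCast, norm_div, norm_mul, norm_zpow, norm_neg, norm_one,
    one_zpow, hodd]
  gcongr
  nlinarith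

theorem summable_oddCosineCoeff (lam : ℂ) : Summable (oddCosineCoeff lam) := by
  have hnat : Summable fun k : ℕ ↦ oddCosineCoeff lam k := by
    refine .of_norm_bounded_eventually_nat (summable_one_div_nat_pow.2 one_lt_two) ?_
    filter_upwards [Filter.eventually_ge_atTop 1, Filter.eventually_ge_atTop ⌈‖lam‖⌉₊]
      with k hk hlam
    exact norm_oddCosineCoeff_le hk (Nat.ceil_le.1 hlam)
  exact hnat.of_nat_of_neg_add_one (by simpa only [oddCosineCoeff_neg_add_one] using hnat)

theorem integral_exp_odd_mul_cos_sub_cos (hodd : ∀ m : ℤ, lam ≠ 2 * m + 1) (m : ℤ) :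
    ∫ x in (-1 : ℝ)..1, Complex.exp (-(π * (2 * m + 1) / 2 * Complex.I * x)) *
        (Complex.cos (π * lam / 2 * x) - Complex.cos (π * lam / 2)) =
      4 * lam ^ 2 * Complex.cos (π * lam / 2) / π * oddCosineCoeff lam m := by
  have hpi : (π : ℂ) ≠ 0 := by exact_mod_cast pi_ne_zero
  have hD := odd_sq_sub_sq_ne_zero hodd m
  have hsq : (π * (2 * m + 1) / 2 : ℂ) ^ 2 - (π * lam / 2) ^ 2 =
      (π / 2) ^ 2 * ((2 * m + 1) ^ 2 - lam ^ 2) := by ring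
  have hint := integral_exp_mul_cos_sub_cos (r := 1) (b := π * (2 * m + 1) / 2)
    (a := π * lam / 2) (by rw [hsq]; exact mul_ne_zero (by simp) hD)
    (by rw [Complex.ofReal_one, mul_one, cos_pi_mul_odd_div_two])
  rw [Complex.ofReal_one, mul_one, mul_one, sin_pi_mul_odd_div_two, hsq] at hint
  rw [hint, oddCosineCoeff]
  field_simp
  ring

theorem hasSum_oddCosineCoeff_mul_exp (hodd : ∀ m : ℤ, lam ≠ 2 * m + 1) {u : ℝ} (hu : |u| ≤ 1) :
    HasSum (fun m : ℤ ↦ 2 * lam ^ 2 * Complex.cos (π * lam / 2) / π * oddCosineCoeff lam m *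
        Complex.exp (π * (2 * m + 1) * u / 2 * Complex.I))
      (Complex.cos (π * lam * u / 2) - Complex.cos (π * lam / 2)) := by
  have hsum := hasSum_exp_int_add_of_summable (a := -1) (b := 1) (θ := 1 / 2) (x := u)
    (f := fun x : ℝ ↦ Complex.cos (π * lam / 2 * x) - Complex.cos (π * lam / 2)) (by norm_num)
    (by fun_prop) (by simp)
    ((summable_oddCosineCoeff lam).mul_left (2 * lam ^ 2 * Complex.cos (π * lam / 2) / π))
    (fun m ↦ ?_) (abs_le.1 hu)
  · convert hsum using 3 <;> push_cast <;> ring_nf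
  · convert integral_exp_odd_mul_cos_sub_cos hodd m using 1
    · congr! 4
      push_cast
      ring
    · push_cast
      ring

theorem hasSum_oddCosineCoeff_mul_cos (hodd : ∀ m : ℤ, lam ≠ 2 * m + 1) {u : ℝ} (hu : |u| ≤ 1) :
    HasSum (fun k : ℕ ↦ 4 * lam ^ 2 * Complex.cos (π * lam / 2) / π *
        (oddCosineCoeff lam k * Complex.cos (π * (2 * k + 1) * u / 2)))
      (Complex.cos (π * lam * u / 2) - Complex.cos (π * lam / 2)) := by
  refine (hasSum_oddCosineCoeff_mul_exp hodd hu).nat_add_neg_add_one.congr_fun fun k ↦ ?_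
  have hneg : (π * (2 * (-(k + 1) : ℤ) + 1) * u / 2 : ℂ) = -(π * (2 * k + 1) * u / 2) := by
    push_cast
    ring
  rw [oddCosineCoeff_neg_add_one, hneg, Int.cast_natCast, ← mul_add, ← Complex.two_cos]
  ring

end OddFrequencies

theorem odd_cosine_series_identity_general (lam : ℂ) (u : ℝ) (hlam : lam ≠ 0)
    (hodd : ∀ m : ℤ, lam ≠ 2 * m + 1) (hu : |u| ≤ 1) :
    HasSum (fun k : ℕ ↦ 2 * ((-1) ^ k * Complex.cos (π * (2 * k + 1) * u / 2) /
        ((2 * k + 1) * ((2 * k + 1) ^ 2 - lam ^ 2))))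
      (π / (2 * lam ^ 2 * Complex.cos (π * lam / 2)) *
        (Complex.cos (π * lam * u / 2) - Complex.cos (π * lam / 2))) := by
  have hpi : (π : ℂ) ≠ 0 := by exact_mod_cast pi_ne_zero
  have hcos := cos_pi_mul_div_two_ne_zero hodd
  refine ((hasSum_oddCosineCoeff_mul_cos hodd hu).mul_left _).congr_fun fun k ↦ ?_
  rw [oddCosineCoeff, zpow_natCast, Int.cast_natCast]
  field_simp
  ring

/-- For `λ > 0` not an odd integer and `|u| ≤ 1`,
`2 ∑_{n odd ≥ 1} (-1)^{(n-1)/2} cos(πnu/2)/(n(n²-λ²))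
  = (π/(2λ² cos(πλ/2))) (cos(πλu/2) - cos(πλ/2))` (sum written over `n = 2k+1`). -/
theorem odd_cosine_series_identity (lam u : ℝ) (hlam : 0 < lam)
    (hodd : ∀ k : ℕ, lam ≠ 2 * k + 1) (hu : |u| ≤ 1) :
    2 * ∑' k : ℕ, (-1 : ℝ) ^ k * Real.cos (Real.pi * (2 * k + 1) * u / 2) /
        ((2 * k + 1) * ((2 * k + 1 : ℝ) ^ 2 - lam ^ 2))
      = (Real.pi / (2 * lam ^ 2 * Real.cos (Real.pi * lam / 2))) *
        (Real.cos (Real.pi * lam * u / 2) - Real.cos (Real.pi * lam / 2)) := by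
  have hsum := odd_cosine_series_identity_general lam u (by exact_mod_cast hlam.ne')
    (fun m ↦ by exact_mod_cast ne_odd_int_of_ne_odd_nat hlam.le hodd m) hu
  rw [← tsum_mul_left]
  exact_mod_cast hsum.tsum_eq
end
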